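/- Suppose the Coxeter system (W, S) has Property F, and let w ∈ W_c. Then w is star reducible to a reduced product of n(w) distinct pairwise commuting generators from S. -/

import Mathlib

open CoxeterSystem

variable {B W : Type*} [Group W] {M : CoxeterMatrix B} (cs : CoxeterSystem M W)

/-- `m(s,t) ≥ 3`: `s` and `t` are distinct noncommuting generators
(`M s t = 0` encodes `m(s,t) = ∞`). -/
def Noncomm (M : CoxeterMatrix B) (s t : B) : Prop := M s t = 0 ∨ 3 ≤ M s t

/-- The longest element `w_{st}` of the rank-2 parabolic subgroup `⟨s,t⟩`
(meaningful when `3 ≤ M s t < ∞`). -/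
def longest (s t : B) : W := cs.wordProd (alternatingWord s t (M s t))

/-- `w` is complex: it admits a reduced factorization `x₁ · w_{st} · x₂` where `w_{st}`
is the longest element of a rank-2 parabolic subgroup `⟨s,t⟩` with `3 ≤ m(s,t) < ∞`. -/
def IsComplex (w : W) : Prop :=
  ∃ s t : B, 3 ≤ M s t ∧ ∃ x₁ x₂ : W,
    w = x₁ * longest cs s t * x₂ ∧
    cs.length w = cs.length x₁ + cs.length (longest cs s t : W) + cs.length x₂

/-- `w` is fully commutative, i.e. `w ∈ W_c`. -/
def FullyComm (w : W) : Prop := ¬ IsComplex cs w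

/-- `x` is weakly complex: `x` is complex and `x = s·u` reduced with `u` fully commutative. -/
def IsWeaklyComplex (x : W) : Prop :=
  IsComplex cs x ∧ ∃ (s : B) (u : W), FullyComm cs u ∧ x = cs.simple s * u ∧
    cs.length x = 1 + cs.length u

/-- The alternating product `t s t s ⋯` with `k` factors, beginning with `t`. -/
def altProd (t s : B) (k : ℕ) : W :=
  cs.wordProd ((List.range k).map (fun i => if i % 2 = 0 then t else s))

/-- The left descent set `𝓛(w)`. -/
def leftDescents (w : W) : Set B := {i | cs.IsLeftDescent w i}

/-- The right descent set `𝓡(w)`. -/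
def rightDescents (w : W) : Set B := {i | cs.IsRightDescent w i}

/-- `w` is a reduced product of distinct pairwise commuting generators. -/
def IsCommProd (w : W) : Prop :=
  ∃ l : List B, l.Nodup ∧ (∀ u ∈ l, ∀ u' ∈ l, u ≠ u' → M u u' = 2) ∧
    cs.IsReduced l ∧ w = cs.wordProd l

/-- `y` is left star reducible to `x` with respect to the pair `{s,t}`:
`x` and `y` lie in the same left `{s,t}`-string and `ℓ(x) = ℓ(y) − 1`. -/
def LeftStarReducible (s t : B) (y x : W) : Prop :=
  Noncomm M s t ∧
  ((cs.IsLeftDescent y s ∧ ¬ cs.IsLeftDescent y t ∧ x = cs.simple s * y ∧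
      cs.IsLeftDescent x t) ∨
   (cs.IsLeftDescent y t ∧ ¬ cs.IsLeftDescent y s ∧ x = cs.simple t * y ∧
      cs.IsLeftDescent x s))

/-- `y` is right star reducible to `x` with respect to the pair `{s,t}`. -/
def RightStarReducible (s t : B) (y x : W) : Prop :=
  Noncomm M s t ∧
  ((cs.IsRightDescent y s ∧ ¬ cs.IsRightDescent y t ∧ x = y * cs.simple s ∧
      cs.IsRightDescent x t) ∨
   (cs.IsRightDescent y t ∧ ¬ cs.IsRightDescent y s ∧ x = y * cs.simple t ∧
      cs.IsRightDescent x s))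

/-- `y` is star reducible to `x`: there is a (possibly empty) chain of left and right
star reductions from `y` to `x`. -/
def StarReducible (y x : W) : Prop :=
  Relation.ReflTransGen
    (fun a b => ∃ s t : B, LeftStarReducible cs s t a b ∨ RightStarReducible cs s t a b) y x

/-- Property F: every fully commutative element is star reducible to a reduced product of
distinct pairwise commuting generators. -/
def PropertyF : Prop := ∀ w : W, FullyComm cs w → ∃ x : W, StarReducible cs w x ∧ IsCommProd cs x

/-- `n(w)`: the maximum `k` such that `w` admits a reduced factorization `w = w₁·w₂·w₃`
with `w₂` a reduced product of `k` distinct pairwise commuting generators. -/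
noncomputable def nval (w : W) : ℕ :=
  sSup {k | ∃ w₁ w₂ w₃ : W, w = w₁ * w₂ * w₃ ∧
    cs.length w = cs.length w₁ + cs.length w₂ + cs.length w₃ ∧
    IsCommProd cs w₂ ∧ cs.length w₂ = k}

/-- The Bruhat order: `x ≤ w` iff some reduced word for `w` has a subword that is a
reduced word for `x`. -/
def BruhatLE (x w : W) : Prop :=
  ∃ l l' : List B, cs.IsReduced l ∧ cs.wordProd l = w ∧
    l'.Sublist l ∧ cs.IsReduced l' ∧ cs.wordProd l' = x

/-- `w = wI · wII` is the coset decomposition of `w` with respect to `I = {s,t}`: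
`wI ∈ W_I`, `𝓛(wII) ∩ I = ∅` and `ℓ(w) = ℓ(wI) + ℓ(wII)`. -/
def CosetDecompL (s t : B) (w wI wII : W) : Prop :=
  w = wI * wII ∧ wI ∈ Subgroup.closure {cs.simple s, cs.simple t} ∧
  ¬ cs.IsLeftDescent wII s ∧ ¬ cs.IsLeftDescent wII t ∧
  cs.length w = cs.length wI + cs.length wII

/-- `w = wII · wI` is the right coset decomposition of `w` with respect to `I = {s,t}`:
`wI ∈ W_I`, `𝓡(wII) ∩ I = ∅` and `ℓ(w) = ℓ(wII) + ℓ(wI)`. -/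
def CosetDecompR (s t : B) (w wII wI : W) : Prop :=
  w = wII * wI ∧ wI ∈ Subgroup.closure {cs.simple s, cs.simple t} ∧
  ¬ cs.IsRightDescent wII s ∧ ¬ cs.IsRightDescent wII t ∧
  cs.length w = cs.length wII + cs.length wI

/-- `k_ε(J) = (−1)^{|J ∩ ε⁻¹(0)|}` for a set `J` of generators. -/
noncomputable def kSet (ε : B → Bool) (J : Set B) : ℤ :=
  (-1) ^ (J ∩ {i | ε i = false}).ncard

/-- `k_ε(w) = k_ε(𝓛(w)) · k_ε(𝓡(w))`. -/
noncomputable def kElt (ε : B → Bool) (w : W) : ℤ :=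
  kSet ε (leftDescents cs w) * kSet ε (rightDescents cs w)

namespace CoxeterMatrix

variable (M)

/-- The entries `-2 cos (π / m(i,j))` of the standard Cartan form. -/
noncomputable def cartanEntry (i j : B) : ℝ := -2 * Real.cos (Real.pi / M i j)

/-- The simple coroots of the geometric representation. -/
noncomputable def coroot (i : B) : Module.Dual ℝ (B →₀ ℝ) :=
  Finsupp.linearCombination ℝ (M.cartanEntry i)

theorem coroot_single (i j : B) : M.coroot i (Finsupp.single j 1) = M.cartanEntry i j := by
  simp [coroot]

theorem coroot_self (i : B) : M.coroot i (Finsupp.single i 1) = 2 := by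
  simp [coroot_single, cartanEntry]

theorem cartanEntry_symm (i j : B) : M.cartanEntry i j = M.cartanEntry j i := by
  simp [cartanEntry, M.symmetric i j]

theorem cartanEntry_mul_sub_two (i j : B) :
    M.cartanEntry i j * M.cartanEntry j i - 2 = 2 * Real.cos (2 * (Real.pi / M i j)) := by
  rw [M.cartanEntry_symm j i, cartanEntry, Real.cos_two_mul]
  ring

/-- The simple reflections of the geometric representation. -/
noncomputable def simpleReflection (i : B) : (B →₀ ℝ) ≃ₗ[ℝ] (B →₀ ℝ) :=
  Module.reflection (M.coroot_self i)

theorem sin_two_mul_pi_div_pos {m : ℕ} (hm : 3 ≤ m) : 0 < Real.sin (2 * (Real.pi / m)) := by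
  have hm' : (3 : ℝ) ≤ m := by exact_mod_cast hm
  have hpi := Real.pi_pos
  apply Real.sin_pos_of_pos_of_lt_pi
  · positivity
  · rw [← mul_div_assoc, div_lt_iff₀ (by linarith)]
    nlinarith

theorem isLiftable_simpleReflection : M.IsLiftable M.simpleReflection := by
  intro i j
  by_cases hij : i = j
  · subst hij
    rw [M.diagonal, pow_one]
    rw [mul_eq_one_iff_eq_inv]
    exact (Module.reflection_inv (M.coroot_self i)).symm
  have h1 : M i j ≠ 1 := M.off_diagonal i j hij
  have key := Module.reflection_mul_reflection_pow (M.coroot_self i) (M.coroot_self j) (M i j) _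
    rfl
  apply LinearEquiv.toLinearMap_injective
  refine key.trans ?_
  simp only [coroot_single, cartanEntry_mul_sub_two]
  by_cases h0 : M i j = 0
  · simp [h0]
  by_cases h2 : M i j = 2
  · have h2' : M j i = 2 := by rw [M.symmetric j i, h2]
    ext
    simp [h2, h2', cartanEntry, mul_div_cancel₀]
    ring
  have hsin : Real.sin (2 * (Real.pi / M i j)) ≠ 0 :=
    (sin_two_mul_pi_div_pos (m := M i j) (by omega)).ne'
  have hm : (M i j : ℝ) ≠ 0 := by exact_mod_cast h0
  have S_eval (k : ℤ) := Polynomial.Chebyshev.S_two_mul_real_cos (2 * (Real.pi / M i j)) k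
  rcases Nat.even_or_odd' (M i j) with ⟨p, hp | hp⟩
  · have e1 : ((M i j : ℤ) - 2) / 2 = p - 1 := by omega
    have e2 : ((M i j : ℤ) - 1) / 2 = p - 1 := by omega
    have hS : (Polynomial.Chebyshev.S ℝ (p - 1)).eval
        (2 * Real.cos (2 * (Real.pi / M i j))) = 0 := by
      refine (mul_eq_zero.mp ((S_eval _).trans ?_)).resolve_right hsin
      have : (((p - 1 : ℤ) : ℝ) + 1) * (2 * (Real.pi / M i j)) = Real.pi := by
        have : (M i j : ℝ) = 2 * p := by exact_mod_cast hp
        push_cast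
        field_simp
        linarith
      rw [this, Real.sin_pi]
    rw [e1, e2, hS]
    ext
    simp
  · have e1 : ((M i j : ℤ) - 2) / 2 = p - 1 := by omega
    have e2 : ((M i j : ℤ) - 1) / 2 = p := by omega
    have e3 : ((M i j : ℤ) - 3) / 2 = p - 1 := by omega
    have e4 : (M i j : ℤ) / 2 = p := by omega
    have hS : (Polynomial.Chebyshev.S ℝ p).eval (2 * Real.cos (2 * (Real.pi / M i j))) +
        (Polynomial.Chebyshev.S ℝ (p - 1)).eval (2 * Real.cos (2 * (Real.pi / M i j))) = 0 := by
      refine (mul_eq_zero.mp ?_).resolve_right hsin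
      rw [add_mul, S_eval, S_eval]
      have : (((p : ℤ) : ℝ) + 1) * (2 * (Real.pi / M i j)) =
          2 * Real.pi - (((p - 1 : ℤ) : ℝ) + 1) * (2 * (Real.pi / M i j)) := by
        have : (M i j : ℝ) = 2 * p + 1 := by exact_mod_cast hp
        push_cast
        field_simp
        linarith
      rw [this, Real.sin_two_pi_sub]
      ring
    rw [e1, e2, e3, e4, hS]
    ext
    simp

end CoxeterMatrix

namespace CoxeterSystem

/-- The geometric representation of a Coxeter group. -/
noncomputable def geometricRep : W →* ((B →₀ ℝ) ≃ₗ[ℝ] (B →₀ ℝ)) :=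
  cs.lift ⟨M.simpleReflection, M.isLiftable_simpleReflection⟩

theorem geometricRep_simple (i : B) : cs.geometricRep (cs.simple i) = M.simpleReflection i :=
  cs.lift_apply_simple _ i

theorem simple_mul_simple_pow_ne_one {i j : B} (hij : i ≠ j) {k : ℕ} (hk : 0 < k)
    (hkM : M i j = 0 ∨ k < M i j) : (cs.simple i * cs.simple j) ^ k ≠ 1 := by
  intro h
  have key := Module.reflection_mul_reflection_pow_apply_self
    (M.coroot_self i) (M.coroot_self j) k _ rfl
  have h' := congrArg cs.geometricRep h
  rw [map_pow, map_mul, map_one, geometricRep_simple, geometricRep_simple] at h'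
  have h'' := key.symm.trans (DFunLike.congr_fun h' (Finsupp.single i 1))
  simp only [CoxeterMatrix.coroot_single, M.cartanEntry_mul_sub_two] at h''
  have hi := DFunLike.congr_fun h'' i
  have hj := DFunLike.congr_fun h'' j
  simp [hij, Ne.symm hij] at hi hj
  rcases hkM with h0 | hkM
  · simp [h0, CoxeterMatrix.cartanEntry, M.symmetric j i, Polynomial.Chebyshev.S_eval_two] at hj
    omega
  rcases (show M i j = 2 ∨ 3 ≤ M i j by have := M.off_diagonal i j hij; omega) with h2 | h3
  · obtain rfl : k = 1 := by omega
    norm_num [h2, mul_div_cancel₀] at hi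
  have hm : (3 : ℝ) ≤ M i j := by exact_mod_cast h3
  have hpi := Real.pi_pos
  have hsin := CoxeterMatrix.sin_two_mul_pi_div_pos h3
  have hcos : 0 < Real.cos (Real.pi / M i j) := by
    apply Real.cos_pos_of_mem_Ioo
    constructor
    · have : 0 < Real.pi / M i j := by positivity
      linarith
    · rw [div_lt_div_iff₀ (by linarith) (by norm_num)]
      nlinarith
  have hS1 : (Polynomial.Chebyshev.S ℝ (k - 1)).eval
      (2 * Real.cos (2 * (Real.pi / M i j))) = 0 := by
    refine hj.resolve_right ?_
    simp [CoxeterMatrix.cartanEntry, M.symmetric j i, hcos.ne']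
  have hS0 : (Polynomial.Chebyshev.S ℝ k).eval (2 * Real.cos (2 * (Real.pi / M i j))) = 1 := by
    rw [hS1, add_zero] at hi
    exact hi
  have e1 := Polynomial.Chebyshev.S_two_mul_real_cos (2 * (Real.pi / M i j)) (k - 1)
  have e0 := Polynomial.Chebyshev.S_two_mul_real_cos (2 * (Real.pi / M i j)) k
  rw [hS1, zero_mul] at e1
  rw [hS0, one_mul] at e0
  push_cast at e1 e0
  rw [sub_add_cancel] at e1
  rw [add_mul, one_mul, Real.sin_add, ← e1, zero_mul, zero_add] at e0
  have hc : Real.cos (k * (2 * (Real.pi / M i j))) = 1 := by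
    rw [eq_comm, mul_eq_right₀ hsin.ne'] at e0
    exact e0
  have hk' : (0 : ℝ) < k := by exact_mod_cast hk
  have hpos : 0 < k * (2 * (Real.pi / M i j)) := by positivity
  have hlt : k * (2 * (Real.pi / M i j)) < 2 * Real.pi := by
    have : (k : ℝ) < M i j := by exact_mod_cast hkM
    rw [← mul_div_assoc, ← mul_div_assoc, div_lt_iff₀ (by linarith)]
    nlinarith
  exact hpos.ne' ((Real.cos_eq_one_iff_of_lt_of_lt (by linarith) hlt).mp hc)

theorem simple_injective : Function.Injective cs.simple := by
  intro i j h
  by_contra hij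
  refine cs.simple_mul_simple_pow_ne_one hij one_pos ?_ (by simp [h])
  have := M.off_diagonal i j hij
  omega

open Classical in
/-- The involution `(w, ε) ↦ (s w s, ε + [w = s])` attached to a simple reflection `s`. -/
noncomputable def signedConj (i : B) : Equiv.Perm (W × ZMod 2) :=
  Function.Involutive.toPerm
    (fun p ↦ (cs.simple i * p.1 * cs.simple i, p.2 + if p.1 = cs.simple i then 1 else 0)) (by
      rintro ⟨w, ε⟩
      have : cs.simple i * w * cs.simple i = cs.simple i ↔ w = cs.simple i := by
        constructor
        · intro h
          simpa [mul_assoc] using congrArg (fun x ↦ cs.simple i * x * cs.simple i) h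
        · rintro rfl
          simp
      ext
      · simp [mul_assoc]
      · simp only [this, add_assoc, CharTwo.add_self_eq_zero, add_zero])

open Classical in
theorem signedConj_apply (i : B) (p : W × ZMod 2) :
    cs.signedConj i p =
      (cs.simple i * p.1 * cs.simple i, p.2 + if p.1 = cs.simple i then 1 else 0) := rfl

theorem simple_mul_simple_inv_pow (i j : B) (k : ℕ) :
    ((cs.simple i * cs.simple j) ^ k)⁻¹ * cs.simple j =
      cs.simple j * (cs.simple i * cs.simple j) ^ k := by
  induction k with
  | zero => simp
  | succ k ih =>
    have : (cs.simple i * cs.simple j)⁻¹ * cs.simple j =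
        cs.simple j * (cs.simple i * cs.simple j) := by simp [mul_assoc]
    rw [pow_succ', mul_inv_rev, mul_assoc, this, ← mul_assoc, ih, mul_assoc, ← pow_succ, pow_succ']

open Classical in
theorem signedConj_mul_pow_apply (i j : B) (k : ℕ) (p : W × ZMod 2) :
    ((cs.signedConj i * cs.signedConj j) ^ k) p =
      ((cs.simple i * cs.simple j) ^ k * p.1 * ((cs.simple i * cs.simple j) ^ k)⁻¹,
        p.2 + ∑ n ∈ Finset.range (2 * k),
          if p.1 = cs.simple j * (cs.simple i * cs.simple j) ^ n then 1 else 0) := by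
  induction k with
  | zero => simp
  | succ k ih =>
    rw [pow_succ', Equiv.Perm.mul_apply, ih, Equiv.Perm.mul_apply, signedConj_apply,
      signedConj_apply]
    have hconj := cs.simple_mul_simple_inv_pow i j k
    have hr' : cs.simple i = cs.simple j * (cs.simple j * (cs.simple i * cs.simple j)) *
      cs.simple j := by simp [mul_assoc]
    generalize hr : cs.simple i * cs.simple j = r at hconj hr' ⊢
    ext
    · simp [pow_succ', ← hr, mul_assoc]
    · rw [mul_add, mul_one, Finset.sum_range_succ, Finset.sum_range_succ]
      have h1 : r ^ k * p.1 * (r ^ k)⁻¹ = cs.simple j ↔ p.1 = cs.simple j * r ^ (2 * k) := by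
        rw [mul_inv_eq_iff_eq_mul, ← eq_inv_mul_iff_mul_eq, ← mul_assoc, hconj, mul_assoc,
          ← pow_add, two_mul]
      have h2 : cs.simple j * (r ^ k * p.1 * (r ^ k)⁻¹) * cs.simple j = cs.simple i ↔
          p.1 = cs.simple j * r ^ (2 * k + 1) := by
        rw [hr', mul_left_inj, mul_right_inj, mul_inv_eq_iff_eq_mul, ← eq_inv_mul_iff_mul_eq,
          mul_assoc, ← mul_assoc, hconj, mul_assoc, ← pow_succ', ← pow_add, two_mul, add_assoc]
      simp only [add_assoc, h1, h2]

theorem isLiftable_signedConj : M.IsLiftable cs.signedConj := by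
  classical
  intro i j
  ext1 p
  rw [signedConj_mul_pow_apply, two_mul, Finset.sum_range_add]
  simp [pow_add, CharTwo.add_self_eq_zero]

/-- The action of a Coxeter group on `W × ZMod 2` recording parities of inversion counts. -/
noncomputable def signedConjHom : W →* Equiv.Perm (W × ZMod 2) :=
  cs.lift ⟨cs.signedConj, cs.isLiftable_signedConj⟩

open Classical in
theorem signedConjHom_wordProd (ω : List B) (p : W × ZMod 2) :
    cs.signedConjHom (cs.wordProd ω) p =
      (cs.wordProd ω * p.1 * (cs.wordProd ω)⁻¹, p.2 + (cs.rightInvSeq ω).count p.1) := by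
  induction ω with
  | nil => simp
  | cons i ω ih =>
    rw [wordProd_cons, map_mul, Equiv.Perm.mul_apply, ih,
      show cs.signedConjHom (cs.simple i) = cs.signedConj i from cs.lift_apply_simple _ i,
      signedConj_apply, rightInvSeq, List.count_cons]
    ext
    · simp [mul_assoc]
    · have : cs.wordProd ω * p.1 * (cs.wordProd ω)⁻¹ = cs.simple i ↔
          (cs.wordProd ω)⁻¹ * cs.simple i * cs.wordProd ω = p.1 := by
        constructor
        · intro h
          rw [← h]
          group
        · intro h
          rw [← h]
          group
      simp [this, add_assoc]

open Classical in
theorem count_rightInvSeq_eq {ω ω' : List B} (h : cs.wordProd ω = cs.wordProd ω') (t : W) :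
    ((cs.rightInvSeq ω).count t : ZMod 2) = (cs.rightInvSeq ω').count t := by
  have h1 := cs.signedConjHom_wordProd ω (t, 0)
  rw [h, signedConjHom_wordProd] at h1
  simpa using (congrArg Prod.snd h1).symm

theorem mem_iff_of_count_eq_of_nodup {α : Type*} [DecidableEq α] {l l' : List α} (hl : l.Nodup)
    (hl' : l'.Nodup) {a : α} (h : (l.count a : ZMod 2) = l'.count a) : a ∈ l ↔ a ∈ l' := by
  rw [hl.count, hl'.count] at h
  split_ifs at h <;> simp_all

theorem isReduced_of_nodup_rightInvSeq {ω : List B} (h : (cs.rightInvSeq ω).Nodup) :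
    cs.IsReduced ω := by
  classical
  obtain ⟨ω', hω', heq⟩ := cs.exists_isReduced (cs.wordProd ω)
  have hperm : (cs.rightInvSeq ω).Perm (cs.rightInvSeq ω') :=
    (List.perm_ext_iff_of_nodup h hω'.nodup_rightInvSeq).mpr fun t ↦
      mem_iff_of_count_eq_of_nodup h hω'.nodup_rightInvSeq (cs.count_rightInvSeq_eq heq t)
  have := hperm.length_eq
  rw [length_rightInvSeq, length_rightInvSeq] at this
  rw [IsReduced, heq, hω'.eq, this]

/-- The exchange property. -/
theorem exists_eraseIdx_of_isLeftDescent {ω : List B} (hω : cs.IsReduced ω) {i : B}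
    (hi : cs.IsLeftDescent (cs.wordProd ω) i) :
    ∃ j < ω.length, cs.simple i * cs.wordProd ω = cs.wordProd (ω.eraseIdx j) := by
  classical
  obtain ⟨ω', hω', heq⟩ := cs.exists_isReduced (cs.simple i * cs.wordProd ω)
  have heq' : cs.wordProd ω = cs.wordProd (i :: ω') := by
    rw [wordProd_cons, ← heq, simple_mul_simple_cancel_left]
  have hred : cs.IsReduced (i :: ω') := by
    have := cs.isLeftDescent_iff.mp hi
    rw [heq, hω'.eq] at this
    rw [IsReduced, ← heq', ← this, List.length_cons]
  have hmem : cs.simple i ∈ cs.leftInvSeq ω := by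
    have := cs.count_rightInvSeq_eq (ω := ω.reverse) (ω' := (i :: ω').reverse)
      (by rw [wordProd_reverse, wordProd_reverse, heq']) (cs.simple i)
    rw [rightInvSeq_reverse, rightInvSeq_reverse, List.count_reverse, List.count_reverse] at this
    rw [mem_iff_of_count_eq_of_nodup hω.nodup_leftInvSeq hred.nodup_leftInvSeq this, leftInvSeq]
    exact List.mem_cons_self
  obtain ⟨j, hj, hji⟩ := List.getElem_of_mem hmem
  refine ⟨j, by simpa using hj, ?_⟩
  rw [← getD_leftInvSeq_mul_wordProd, List.getD_eq_getElem _ _ hj, hji]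

theorem inv_prod_alternatingWord_mul (i j : B) (n : ℕ) :
    (cs.wordProd (alternatingWord i j n))⁻¹ * cs.simple (if Even n then j else i) *
      cs.wordProd (alternatingWord i j n) = cs.simple j * (cs.simple i * cs.simple j) ^ n := by
  have hconj := cs.simple_mul_simple_inv_pow i j (n / 2)
  rw [prod_alternatingWord_eq_mul_pow]
  split_ifs with h
  · rw [one_mul, hconj, mul_assoc, ← pow_add]
    congr 2
    have := Nat.even_iff.mp h
    omega
  · have e : n = n / 2 + (1 + n / 2) := by
      have := Nat.not_even_iff.mp h
      omega
    rw [mul_inv_rev, inv_simple, hconj]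
    nth_rw 3 [e]
    rw [pow_add, pow_add, pow_one]
    simp only [mul_assoc]

theorem mem_rightInvSeq_alternatingWord (i j : B) (n : ℕ) (t : W) :
    t ∈ cs.rightInvSeq (alternatingWord i j n) ↔
      ∃ k < n, t = cs.simple j * (cs.simple i * cs.simple j) ^ k := by
  induction n with
  | zero => simp [alternatingWord]
  | succ n ih =>
    rw [alternatingWord_succ', rightInvSeq, List.mem_cons, ih, inv_prod_alternatingWord_mul]
    constructor
    · rintro (h | ⟨k, hk, h⟩)
      · exact ⟨n, by omega, h⟩
      · exact ⟨k, by omega, h⟩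
    · rintro ⟨k, hk, h⟩
      rcases (show k = n ∨ k < n by omega) with rfl | hk
      · exact .inl h
      · exact .inr ⟨k, hk, h⟩

theorem isReduced_alternatingWord {i j : B} (hij : i ≠ j) {n : ℕ} (hn : M i j = 0 ∨ n ≤ M i j) :
    cs.IsReduced (alternatingWord i j n) := by
  apply isReduced_of_nodup_rightInvSeq
  induction n with
  | zero => simp [alternatingWord]
  | succ n ih =>
    rw [alternatingWord_succ', rightInvSeq, List.nodup_cons, inv_prod_alternatingWord_mul,
      mem_rightInvSeq_alternatingWord]
    refine ⟨?_, ih (by omega)⟩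
    rintro ⟨k, hk, h⟩
    refine cs.simple_mul_simple_pow_ne_one hij (k := n - k) (by omega) (by omega) ?_
    rw [pow_sub _ hk.le, mul_left_cancel h, mul_inv_cancel]

end CoxeterSystem

theorem FullyComm.of_mul {cs : CoxeterSystem M W} {u v : W} (h : FullyComm cs (u * v))
    (hl : cs.length (u * v) = cs.length u + cs.length v) : FullyComm cs v := by
  rintro ⟨s, t, hst, x₁, x₂, rfl, hx⟩
  refine h ⟨s, t, hst, u * x₁, x₂, by simp only [mul_assoc], ?_⟩
  have h1 := cs.length_mul_le u x₁
  have h2 := cs.length_mul_le (u * x₁ * longest cs s t) x₂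
  have h3 := cs.length_mul_le (u * x₁) (longest cs s t)
  simp only [mul_assoc] at *
  omega

theorem length_wordProd_append {ω ω' : List B} (h : cs.IsReduced (ω ++ ω')) :
    cs.length (cs.wordProd (ω ++ ω')) =
      cs.length (cs.wordProd ω) + cs.length (cs.wordProd ω') := by
  have h1 := h.take ω.length
  have h2 := h.drop ω.length
  rw [List.take_left] at h1
  rw [List.drop_left] at h2
  rw [h.eq, h1.eq, h2.eq, List.length_append]

theorem FullyComm.of_append {cs : CoxeterSystem M W} {ω ω' : List B}
    (h : FullyComm cs (cs.wordProd (ω ++ ω'))) (hred : cs.IsReduced (ω ++ ω')) :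
    FullyComm cs (cs.wordProd ω') := by
  have hl := length_wordProd_append cs hred
  rw [cs.wordProd_append] at h hl
  exact h.of_mul hl

/-- If both `i` and `j` are left descents of `w`, then `w` has a reduced word starting with
any alternating word in `i` and `j` that is itself reduced. -/
theorem exists_isReduced_alternatingWord_append {i j : B} (hij : i ≠ j) {w : W}
    (hi : cs.IsLeftDescent w i) (hj : cs.IsLeftDescent w j) {n : ℕ}
    (hn : M i j = 0 ∨ n ≤ M i j) :
    ∃ u, cs.IsReduced (alternatingWord i j n ++ u) ∧
      w = cs.wordProd (alternatingWord i j n ++ u) := by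
  induction n with
  | zero => simpa [alternatingWord] using cs.exists_isReduced w
  | succ n ih =>
    obtain ⟨u, hred, rfl⟩ := ih (by omega)
    have halt := cs.isReduced_alternatingWord hij hn
    rw [alternatingWord_succ'] at halt ⊢
    have hc : cs.IsLeftDescent (cs.wordProd (alternatingWord i j n ++ u))
        (if Even n then j else i) := by split_ifs <;> assumption
    generalize (if Even n then j else i) = c at halt hc ⊢
    obtain ⟨k, hk, hkeq⟩ := cs.exists_eraseIdx_of_isLeftDescent hred hc
    rcases lt_or_ge k (alternatingWord i j n).length with hlt | hge
    · exfalso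
      rw [List.eraseIdx_append_of_lt_length hlt, cs.wordProd_append, cs.wordProd_append,
        ← mul_assoc, mul_left_inj, ← cs.wordProd_cons] at hkeq
      have h1 := cs.length_wordProd_le ((alternatingWord i j n).eraseIdx k)
      rw [← hkeq, halt.eq, List.length_eraseIdx_of_lt hlt, List.length_cons] at h1
      omega
    · rw [List.eraseIdx_append_of_length_le hge] at hkeq
      refine ⟨u.eraseIdx (k - (alternatingWord i j n).length), ?_, ?_⟩
      · rw [CoxeterSystem.IsReduced, List.cons_append, cs.wordProd_cons, ← hkeq, simple_mul_simple_cancel_left,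
          hred.eq]
        rw [List.length_append] at hk
        simp only [List.length_append, List.length_cons]
        rw [List.length_eraseIdx_of_lt (by omega)]
        omega
      · rw [List.cons_append, cs.wordProd_cons, ← hkeq, simple_mul_simple_cancel_left]

theorem FullyComm.coxeterMatrix_eq_two {cs : CoxeterSystem M W} {w : W} (hw : FullyComm cs w)
    {i j : B} (hij : i ≠ j) (hi : cs.IsLeftDescent w i) (hj : cs.IsLeftDescent w j) :
    M i j = 2 := by
  by_contra h2
  have h1 := M.off_diagonal i j hij
  by_cases h0 : M i j = 0
  · obtain ⟨u, hred, heq⟩ := exists_isReduced_alternatingWord_append cs hij hi hj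
      (n := cs.length w + 1) (.inl h0)
    have := hred.eq
    rw [← heq, List.length_append, length_alternatingWord] at this
    omega
  · obtain ⟨u, hred, rfl⟩ := exists_isReduced_alternatingWord_append cs hij hi hj
      (n := M i j) (.inr le_rfl)
    refine hw ⟨i, j, by omega, 1, cs.wordProd u, ?_, ?_⟩
    · rw [one_mul, cs.wordProd_append, longest]
    · rw [length_wordProd_append cs hred, cs.length_one, zero_add, longest]

theorem isLeftDescent_cons {i : B} {ω : List B} (h : cs.IsReduced (i :: ω)) :
    cs.IsLeftDescent (cs.wordProd (i :: ω)) i := by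
  have h1 := cs.length_wordProd_le ω
  rw [IsLeftDescent, h.eq, cs.wordProd_cons, simple_mul_simple_cancel_left, List.length_cons]
  omega

/-- A left descent of a fully commutative element occurs in every reduced word, and it commutes
with all the letters preceding its first occurrence. -/
theorem FullyComm.exists_eq_append_cons {cs : CoxeterSystem M W} {ω : List B}
    (hw : FullyComm cs (cs.wordProd ω)) (hred : cs.IsReduced ω) {s : B}
    (hs : cs.IsLeftDescent (cs.wordProd ω) s) :
    ∃ p q, ω = p ++ s :: q ∧ ∀ a ∈ p, M a s = 2 := by
  induction ω with
  | nil => simp [IsLeftDescent] at hs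
  | cons a ω ih =>
    by_cases has : a = s
    · exact ⟨[], ω, by simp [has], by simp⟩
    have hM := hw.coxeterMatrix_eq_two has (isLeftDescent_cons cs hred) hs
    have hred' : cs.IsReduced ω := hred.drop 1
    have hs' : cs.IsLeftDescent (cs.wordProd ω) s := by
      obtain ⟨k, hk, hkeq⟩ := cs.exists_eraseIdx_of_isLeftDescent hred hs
      have hcomm : cs.simple s * cs.simple a = cs.simple a * cs.simple s := by
        have := cs.simple_mul_simple_pow a s
        rw [hM, pow_two, mul_eq_one_iff_eq_inv] at this
        simpa using this.symm
      rw [cs.wordProd_cons, ← mul_assoc, hcomm, mul_assoc] at hkeq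
      cases k with
      | zero =>
        rw [List.eraseIdx_zero, List.tail_cons, ← mul_assoc, mul_eq_right,
          mul_eq_one_iff_eq_inv, cs.inv_simple] at hkeq
        exact absurd (cs.simple_injective hkeq) has
      | succ k =>
        rw [List.eraseIdx_cons_succ, cs.wordProd_cons, mul_right_inj] at hkeq
        rw [List.length_cons, Nat.add_lt_add_iff_right] at hk
        have h1 := cs.length_wordProd_le (ω.eraseIdx k)
        rw [List.length_eraseIdx_of_lt hk] at h1
        rw [IsLeftDescent, hkeq, hred'.eq]
        omega
    obtain ⟨p, q, rfl, hp⟩ := ih (hw.of_append (ω := [a]) hred) hred' hs'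
    exact ⟨a :: p, q, rfl, by simpa [hM] using hp⟩

/-- The cardinalities of the commuting products that occur as reduced factors of `w`. -/
def commFactorLengths (w : W) : Set ℕ :=
  {k | ∃ w₁ w₂ w₃ : W, w = w₁ * w₂ * w₃ ∧
    cs.length w = cs.length w₁ + cs.length w₂ + cs.length w₃ ∧
    IsCommProd cs w₂ ∧ cs.length w₂ = k}

theorem nval_eq_sSup (w : W) : nval cs w = sSup (commFactorLengths cs w) := rfl

theorem IsCommProd.inv {cs : CoxeterSystem M W} {w : W} (h : IsCommProd cs w) :
    IsCommProd cs w⁻¹ := by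
  obtain ⟨l, hl, hcomm, hred, rfl⟩ := h
  exact ⟨l.reverse, by simpa, by simpa using hcomm, hred.reverse, by simp⟩

theorem commFactorLengths_subset_inv (w : W) :
    commFactorLengths cs w ⊆ commFactorLengths cs w⁻¹ := by
  rintro k ⟨w₁, w₂, w₃, rfl, hl, hc, rfl⟩
  refine ⟨w₃⁻¹, w₂⁻¹, w₁⁻¹, by simp [mul_assoc], ?_, hc.inv, by simp⟩
  simp only [cs.length_inv]
  omega

theorem commFactorLengths_inv (w : W) : commFactorLengths cs w⁻¹ = commFactorLengths cs w :=
  (by simpa using commFactorLengths_subset_inv cs w⁻¹ :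
    commFactorLengths cs w⁻¹ ⊆ commFactorLengths cs w).antisymm
    (commFactorLengths_subset_inv cs w)

theorem longest_inv (s t : B) : (longest cs s t)⁻¹ = longest cs s t ∨
    (longest cs s t)⁻¹ = longest cs t s := by
  simp only [longest, cs.prod_alternatingWord_eq_mul_pow, M.symmetric t s]
  split_ifs
  · right
    simp [← inv_pow]
  · left
    rw [mul_inv_rev, cs.inv_simple, cs.simple_mul_simple_inv_pow]

theorem IsComplex.inv {cs : CoxeterSystem M W} {w : W} (h : IsComplex cs w) :
    IsComplex cs w⁻¹ := by
  obtain ⟨s, t, hst, x₁, x₂, rfl, hl⟩ := h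
  have hlen := cs.length_inv (longest cs s t)
  rcases longest_inv cs s t with h | h
  · refine ⟨s, t, hst, x₂⁻¹, x₁⁻¹, by simp [mul_assoc, h], ?_⟩
    simp only [cs.length_inv]
    omega
  · refine ⟨t, s, by rwa [M.symmetric t s], x₂⁻¹, x₁⁻¹, by simp [mul_assoc, h], ?_⟩
    simp only [cs.length_inv]
    rw [h] at hlen
    omega

theorem FullyComm.inv {cs : CoxeterSystem M W} {w : W} (h : FullyComm cs w) :
    FullyComm cs w⁻¹ := fun hc ↦ h (by simpa using hc.inv)

theorem length_mem_commFactorLengths {p l q : List B} (hred : cs.IsReduced (p ++ (l ++ q)))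
    (hl : l.Nodup) (hcomm : ∀ u ∈ l, ∀ u' ∈ l, u ≠ u' → M u u' = 2) :
    l.length ∈ commFactorLengths cs (cs.wordProd (p ++ (l ++ q))) := by
  have hred' : cs.IsReduced (l ++ q) := by
    have := hred.drop p.length
    rwa [List.drop_left] at this
  have hredl : cs.IsReduced l := by
    have := hred'.take l.length
    rwa [List.take_left] at this
  refine ⟨cs.wordProd p, cs.wordProd l, cs.wordProd q, ?_, ?_, ⟨l, hl, hcomm, hredl, rfl⟩,
    hredl⟩
  · rw [cs.wordProd_append, cs.wordProd_append, mul_assoc]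
  · rw [length_wordProd_append cs hred, length_wordProd_append cs hred', add_assoc]

theorem exists_words_of_mem_commFactorLengths {w : W} {k : ℕ} (hk : k ∈ commFactorLengths cs w) :
    ∃ p l q : List B, cs.IsReduced (p ++ (l ++ q)) ∧ w = cs.wordProd (p ++ (l ++ q)) ∧
      l.Nodup ∧ (∀ u ∈ l, ∀ u' ∈ l, u ≠ u' → M u u' = 2) ∧ l.length = k := by
  obtain ⟨w₁, w₂, w₃, rfl, hlen, ⟨l, hl, hcomm, hred, rfl⟩, rfl⟩ := hk
  obtain ⟨p, hp, rfl⟩ := cs.exists_isReduced w₁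
  obtain ⟨q, hq, rfl⟩ := cs.exists_isReduced w₃
  refine ⟨p, l, q, ?_, ?_, hl, hcomm, hred.symm⟩
  · rw [hp.eq, hred.eq, hq.eq, mul_assoc, ← cs.wordProd_append, ← cs.wordProd_append] at hlen
    rw [CoxeterSystem.IsReduced, hlen]
    simp only [List.length_append, add_assoc]
  · rw [cs.wordProd_append, cs.wordProd_append, mul_assoc]

theorem commFactorLengths_subset_of_isLeftDescent {y : W} {s : B} (hs : cs.IsLeftDescent y s) :
    commFactorLengths cs (cs.simple s * y) ⊆ commFactorLengths cs y := by
  rintro k ⟨w₁, w₂, w₃, heq, hl, hc, rfl⟩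
  have hy : y = cs.simple s * w₁ * w₂ * w₃ := by
    rw [← cs.simple_mul_simple_cancel_left s (w := y), heq]
    simp only [mul_assoc]
  refine ⟨cs.simple s * w₁, w₂, w₃, hy, ?_, hc, rfl⟩
  have h0 := cs.isLeftDescent_iff.mp hs
  have h1 := cs.length_mul_le (cs.simple s) w₁
  have h2 := cs.length_mul_le (cs.simple s * w₁ * w₂) w₃
  have h3 := cs.length_mul_le (cs.simple s * w₁) w₂
  rw [cs.length_simple] at h1
  rw [← hy] at h2
  omega

/-- Moving a letter past letters commuting with it does not change the product. -/
theorem wordProd_append_cons_of_comm {p : List B} {s : B} (q : List B)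
    (hp : ∀ a ∈ p, M a s = 2) : cs.wordProd (p ++ s :: q) = cs.wordProd (s :: (p ++ q)) := by
  induction p with
  | nil => rfl
  | cons a p ih =>
    have hcomm : cs.simple a * cs.simple s = cs.simple s * cs.simple a := by
      have := cs.simple_mul_simple_pow a s
      rw [hp a (by simp), pow_two, mul_eq_one_iff_eq_inv] at this
      simpa using this
    rw [List.cons_append, cs.wordProd_cons, ih fun b hb ↦ hp b (by simp [hb]),
      List.cons_append, cs.wordProd_cons, cs.wordProd_cons, cs.wordProd_cons, ← mul_assoc, hcomm,
      mul_assoc]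

theorem append_eq_append_cons_cases {α : Type*} {p l a b : List α} {s : α}
    (h : p ++ l = a ++ s :: b) :
    (∃ c, p = a ++ s :: c ∧ b = c ++ l) ∨ ∃ c, a = p ++ c ∧ l = c ++ s :: b := by
  rcases List.append_eq_append_iff.mp h with ⟨c, h1, h2⟩ | ⟨c, h1, h2⟩
  · exact .inr ⟨c, h1, h2⟩
  · rcases List.cons_eq_append_iff.mp h2 with ⟨rfl, rfl⟩ | ⟨d, rfl, rfl⟩
    · exact .inr ⟨[], by simpa using h1.symm, rfl⟩
    · exact .inl ⟨d, h1, rfl⟩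

theorem Noncomm.ne_two {s t : B} (h : Noncomm M s t) : M s t ≠ 2 := by
  rcases h with h | h <;> omega

theorem subset_commFactorLengths_of_isLeftDescent {y : W} (hy : FullyComm cs y) {s t : B}
    (hst : Noncomm M s t) (hs : cs.IsLeftDescent y s)
    (ht : cs.IsLeftDescent (cs.simple s * y) t) :
    commFactorLengths cs y ⊆ commFactorLengths cs (cs.simple s * y) := by
  intro k hk
  obtain ⟨p, l, q, hred, rfl, hl, hcomm, rfl⟩ := exists_words_of_mem_commFactorLengths cs hk
  obtain ⟨a, b, hab, ha⟩ := hy.exists_eq_append_cons hred hs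
  have hx : cs.simple s * cs.wordProd (p ++ (l ++ q)) = cs.wordProd (a ++ b) := by
    rw [hab, wordProd_append_cons_of_comm cs _ ha, cs.wordProd_cons,
      simple_mul_simple_cancel_left]
  have hredx : cs.IsReduced (a ++ b) := by
    have := cs.isLeftDescent_iff.mp hs
    rw [hx, hred.eq, hab] at this
    simp only [List.length_append, List.length_cons] at this
    rw [CoxeterSystem.IsReduced, List.length_append]
    omega
  have hfx : FullyComm cs (cs.wordProd (a ++ b)) := by
    have hyred := hred
    rw [CoxeterSystem.IsReduced, hab, wordProd_append_cons_of_comm cs _ ha] at hyred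
    rw [hab, wordProd_append_cons_of_comm cs _ ha] at hy
    refine FullyComm.of_append (ω := [s]) hy ?_
    rw [List.singleton_append, CoxeterSystem.IsReduced, hyred]
    simp [add_assoc]
  rw [hx] at ht ⊢
  rcases append_eq_append_cons_cases hab with ⟨c, rfl, rfl⟩ | ⟨c, rfl, hc⟩
  · have := length_mem_commFactorLengths cs (p := a ++ c) (l := l) (q := q)
      (by simpa using hredx) hl hcomm
    simpa using this
  rcases append_eq_append_cons_cases hc with ⟨d, rfl, rfl⟩ | ⟨d, rfl, rfl⟩
  · obtain ⟨e, f, hef, he⟩ := hfx.exists_eq_append_cons hredx ht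
    have hst' : s ≠ t := by
      rintro rfl
      rcases hst with h | h <;> simp at h
    have htmem : t ∉ p ++ (c ++ d) := by
      intro h
      rw [← List.append_assoc, List.mem_append] at h
      rcases h with h | h
      · exact hst.ne_two (by rw [M.symmetric s t, ha t h])
      · exact hst.ne_two (hcomm s (by simp) t (by simp [h]) hst')
    have hef' : p ++ (c ++ d) ++ q = e ++ t :: f := by simpa using hef
    rcases append_eq_append_cons_cases hef' with ⟨g, hg, rfl⟩ | ⟨g, rfl, rfl⟩
    · exact absurd (by rw [hg]; simp) htmem
    have hprod : cs.wordProd (p ++ c ++ (d ++ (g ++ t :: f))) =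
        cs.wordProd (p ++ ((t :: (c ++ d)) ++ (g ++ f))) := by
      have h1 := wordProd_append_cons_of_comm cs f he
      have h2 := wordProd_append_cons_of_comm cs (c ++ d ++ (g ++ f)) (p := p) (s := t)
        fun x hx ↦ he x (by simp [hx])
      simp only [List.append_assoc, List.cons_append] at h1 h2 ⊢
      rw [h1, h2]
    have hlen : (c ++ s :: d).length = (t :: (c ++ d)).length := by simp [add_assoc]
    rw [hprod, hlen]
    apply length_mem_commFactorLengths
    · have := hredx.eq
      rw [CoxeterSystem.IsReduced, ← hprod, this]
      simp only [List.length_append, List.length_cons]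
      omega
    · rw [List.nodup_cons]
      exact ⟨fun h ↦ htmem (List.mem_append_right _ h),
        hl.sublist (List.Sublist.append_left (List.sublist_cons_self _ _) _)⟩
    · have hsub : ∀ x ∈ c ++ d, x ∈ c ++ s :: d := by
        intro x hx
        rw [List.mem_append] at hx
        rcases hx with hx | hx <;> simp [hx]
      have het : ∀ x ∈ c ++ d, M x t = 2 := fun x hx ↦
        he x (List.mem_append_left _ (List.mem_append_right _ hx))
      intro u hu v hv huv
      rcases List.mem_cons.mp hu with rfl | hu' <;> rcases List.mem_cons.mp hv with rfl | hv'
      · exact absurd rfl huv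
      · rw [M.symmetric]
        exact het v hv'
      · exact het u hu'
      · exact hcomm u (hsub u hu') v (hsub v hv') huv
  · have := length_mem_commFactorLengths cs (p := p) (l := l) (q := d ++ b)
      (by simpa using hredx) hl hcomm
    simpa using this

theorem LeftStarReducible.commFactorLengths_eq {cs : CoxeterSystem M W} {s t : B} {y x : W}
    (h : LeftStarReducible cs s t y x) (hy : FullyComm cs y) :
    commFactorLengths cs x = commFactorLengths cs y ∧ FullyComm cs x := by
  have main {s t : B} (hst : Noncomm M s t) (hs : cs.IsLeftDescent y s)
      (ht : cs.IsLeftDescent (cs.simple s * y) t) :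
      commFactorLengths cs (cs.simple s * y) = commFactorLengths cs y ∧
        FullyComm cs (cs.simple s * y) := by
    refine ⟨(commFactorLengths_subset_of_isLeftDescent cs hs).antisymm
      (subset_commFactorLengths_of_isLeftDescent cs hy hst hs ht), ?_⟩
    refine FullyComm.of_mul (u := cs.simple s) (by simpa using hy) ?_
    have := cs.isLeftDescent_iff.mp hs
    rw [simple_mul_simple_cancel_left, cs.length_simple]
    omega
  obtain ⟨hst, ⟨hs, -, rfl, ht⟩ | ⟨ht, -, rfl, hs⟩⟩ := h
  · exact main hst hs ht
  · refine main (s := t) (t := s) ?_ ht hs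
    rwa [Noncomm, M.symmetric t s]

theorem RightStarReducible.inv {cs : CoxeterSystem M W} {s t : B} {y x : W}
    (h : RightStarReducible cs s t y x) : LeftStarReducible cs s t y⁻¹ x⁻¹ := by
  obtain ⟨hst, ⟨hs, hs', rfl, ht⟩ | ⟨ht, ht', rfl, hs⟩⟩ := h
  · exact ⟨hst, .inl ⟨cs.isLeftDescent_inv_iff.mpr hs, cs.isLeftDescent_inv_iff.not.mpr hs',
      by simp, cs.isLeftDescent_inv_iff.mpr ht⟩⟩
  · exact ⟨hst, .inr ⟨cs.isLeftDescent_inv_iff.mpr ht, cs.isLeftDescent_inv_iff.not.mpr ht',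
      by simp, cs.isLeftDescent_inv_iff.mpr hs⟩⟩

theorem RightStarReducible.commFactorLengths_eq {cs : CoxeterSystem M W} {s t : B} {y x : W}
    (h : RightStarReducible cs s t y x) (hy : FullyComm cs y) :
    commFactorLengths cs x = commFactorLengths cs y ∧ FullyComm cs x := by
  have := h.inv.commFactorLengths_eq hy.inv
  rw [commFactorLengths_inv, commFactorLengths_inv] at this
  exact ⟨this.1, by simpa using this.2.inv⟩

theorem StarReducible.commFactorLengths_eq {cs : CoxeterSystem M W} {y x : W}
    (h : StarReducible cs y x) (hy : FullyComm cs y) :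
    commFactorLengths cs x = commFactorLengths cs y ∧ FullyComm cs x := by
  induction h with
  | refl => exact ⟨rfl, hy⟩
  | tail _ hstep ih =>
    obtain ⟨s, t, hstep | hstep⟩ := hstep
    · exact ⟨(hstep.commFactorLengths_eq ih.2).1.trans ih.1, (hstep.commFactorLengths_eq ih.2).2⟩
    · exact ⟨(hstep.commFactorLengths_eq ih.2).1.trans ih.1, (hstep.commFactorLengths_eq ih.2).2⟩

theorem IsCommProd.nval_eq {cs : CoxeterSystem M W} {w : W} (h : IsCommProd cs w) :
    nval cs w = cs.length w := by
  rw [nval_eq_sSup]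
  apply IsGreatest.csSup_eq
  refine ⟨⟨1, w, 1, by simp, by simp, h, rfl⟩, ?_⟩
  rintro k ⟨w₁, w₂, w₃, -, hl, -, rfl⟩
  omega

/-- Corollary 7.3: if `W` has Property F and `w ∈ W_c`, then `w` is star reducible to a
reduced product of `n(w)` distinct pairwise commuting generators. -/
theorem statement8 (hF : PropertyF cs) (w : W) (hw : FullyComm cs w) :
    ∃ (x : W) (l : List B), StarReducible cs w x ∧ l.Nodup ∧
      (∀ u ∈ l, ∀ u' ∈ l, u ≠ u' → M u u' = 2) ∧ cs.IsReduced l ∧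
      x = cs.wordProd l ∧ l.length = nval cs w := by
  obtain ⟨x, hwx, hx⟩ := hF w hw
  have hn : nval cs w = cs.length x := by
    rw [← hx.nval_eq, nval_eq_sSup, nval_eq_sSup, (hwx.commFactorLengths_eq hw).1]
  obtain ⟨l, hl, hcomm, hred, rfl⟩ := hx
  exact ⟨_, l, hwx, hl, hcomm, hred, rfl, by rw [hn, hred.eq]⟩
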